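/- arXiv:0903.0473 — 2 statements merged into one kernel-verified Lean document; each statement's English description precedes it below -/
import Mathlib

section
/- Let s1 be a nonnegative integer and s2, s4 positive integers with s1+s4 > 1, s2+s4 > 1 and s1+s2+s4 > 2. Then ζ_so(s1,s2,0,s4) = 2^{s2−1} · [ ζ_MT(s1,s2;s4) + ∑_{a1=0}^{s1−1} C(s2+a1−1, a1) · ζ(s4+s2+a1, s1−a1; −1, −1) + ∑_{a2=0}^{s2−1} C(s1+a2−1, a2) · ζ(s4+s1+a2, s2−a2; 1, −1) ], where C(n,k) denotes the binomial coefficient. -/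
noncomputable def zetaSO (s1 s2 s3 s4 : ℕ) : ℝ :=
  ∑' (m : ℕ+) (n : ℕ+),
    1 / ((m : ℝ) ^ s1 * (n : ℝ) ^ s2 * ((m : ℝ) + (n : ℝ)) ^ s3 * ((m : ℝ) + 2 * (n : ℝ)) ^ s4)

noncomputable def zetaMT2 (s1 s2 s : ℕ) : ℝ :=
  ∑' (m : ℕ+) (n : ℕ+), 1 / ((m : ℝ) ^ s1 * (n : ℝ) ^ s2 * ((m : ℝ) + (n : ℝ)) ^ s)

/-- Depth-two alternating Euler sum `ζ(s1,s2; x1,x2)`, summing over `m1 = n + k > m2 = n ≥ 1`. -/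
noncomputable def es2 (s1 s2 : ℕ) (x1 x2 : ℝ) : ℝ :=
  ∑' (n : ℕ+) (k : ℕ+),
    x1 ^ ((n : ℕ) + (k : ℕ)) * x2 ^ (n : ℕ) / (((n : ℝ) + (k : ℝ)) ^ s1 * (n : ℝ) ^ s2)

/-!
Since `1 + (-1) ^ n` is `2` for even `n` and `0` for odd `n`, restricting `ζ_MT(s1, s2; s4)` to
even `n` shows that `ζ_so(s1, s2, 0, s4)` is `2 ^ s2 / 2` times the sum of `ζ_MT(s1, s2; s4)` and
its twist by `(-1) ^ n`. The partial fraction expansion of `1 / (m ^ s1 * n ^ s2)` in powers of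
`1 / (m + n)` then writes every twisted Mordell–Tornheim sum as a combination of double Euler sums.
-/

section PartialFraction

/-- The part of the partial fraction expansion of `u ^ r * v ^ s` that involves only `u` and `w`,
where `u * v = w * (u + v)`; the intended case is `u = 1 / m`, `v = 1 / n`, `w = 1 / (m + n)`.
For `s = 0` the binomial coefficient `(a - 1).choose a` with truncated subtraction is `1` at `a = 0`
and `0` elsewhere. -/
def partialFraction {R : Type*} [CommSemiring R] (u w : R) (r s : ℕ) : R :=
  ∑ a ∈ Finset.range r, ((s + a - 1).choose a : R) * (w ^ (s + a) * u ^ (r - a))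

variable {R : Type*} [CommSemiring R]

@[simp]
lemma partialFraction_zero_left (u w : R) (s : ℕ) : partialFraction u w 0 s = 0 := by
  simp [partialFraction]

lemma partialFraction_succ_zero (u w : R) (r : ℕ) :
    partialFraction u w (r + 1) 0 = u ^ (r + 1) := by
  rw [partialFraction, Finset.sum_range_succ', Finset.sum_eq_zero]
  · simp
  · exact fun a _ ↦ by simp

lemma partialFraction_succ_succ (u w : R) (r s : ℕ) :
    partialFraction u w (r + 1) (s + 1) =
      w * (partialFraction u w r (s + 1) + partialFraction u w (r + 1) s) := by
  have pascal (a : ℕ) :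
      ((s + 1 + (a + 1) - 1).choose (a + 1) : R) =
        (s + 1 + a - 1).choose a + (s + (a + 1) - 1).choose (a + 1) := by
    rw [show s + 1 + (a + 1) - 1 = s + a + 1 by omega, show s + 1 + a - 1 = s + a by omega,
      show s + (a + 1) - 1 = s + a by omega, Nat.choose_succ_succ, Nat.cast_add]
  have summand_succ (a : ℕ) :
      ((s + 1 + (a + 1) - 1).choose (a + 1) : R) *
          (w ^ (s + 1 + (a + 1)) * u ^ (r + 1 - (a + 1))) =
        w * (((s + 1 + a - 1).choose a : R) * (w ^ (s + 1 + a) * u ^ (r - a))) +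
          w * (((s + (a + 1) - 1).choose (a + 1) : R) *
            (w ^ (s + (a + 1)) * u ^ (r + 1 - (a + 1)))) := by
    rw [pascal, Nat.add_sub_add_right]
    ring
  rw [partialFraction, Finset.sum_range_succ', Finset.sum_congr rfl fun a _ ↦ summand_succ a,
    Finset.sum_add_distrib, ← Finset.mul_sum, ← Finset.mul_sum, partialFraction, partialFraction,
    Finset.sum_range_succ' _ r]
  simp only [add_zero, Nat.choose_zero_right, Nat.cast_one, tsub_zero]
  ring

theorem pow_mul_pow_eq_partialFraction_add {u v w : R} (huv : u * v = w * (u + v)) :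
    ∀ {r s : ℕ}, 0 < r + s →
      u ^ r * v ^ s = partialFraction u w r s + partialFraction v w s r
  | 0, s + 1, _ | s + 1, 0, _ => by simp [partialFraction_succ_zero]
  | r + 1, s + 1, _ => by
    calc u ^ (r + 1) * v ^ (s + 1) = u * v * (u ^ r * v ^ s) := by ring
      _ = w * (u ^ r * v ^ (s + 1) + u ^ (r + 1) * v ^ s) := by rw [huv]; ring
      _ = partialFraction u w (r + 1) (s + 1) + partialFraction v w (s + 1) (r + 1) := by
        rw [pow_mul_pow_eq_partialFraction_add huv (show 0 < r + (s + 1) by omega),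
          pow_mul_pow_eq_partialFraction_add huv (show 0 < r + 1 + s by omega),
          partialFraction_succ_succ, partialFraction_succ_succ]
        ring

lemma div_pow_mul_partialFraction_inv {K : Type*} [Field K] (c m k : K) (r s t : ℕ) :
    c / k ^ t * partialFraction m⁻¹ k⁻¹ r s =
      ∑ a ∈ Finset.range r,
        ((s + a - 1).choose a : K) * (c / (k ^ (t + s + a) * m ^ (r - a))) := by
  rw [partialFraction, Finset.mul_sum]
  refine Finset.sum_congr rfl fun a _ ↦ ?_
  simp only [div_eq_mul_inv, mul_inv, ← inv_pow, pow_add]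
  ring

end PartialFraction

section EulerSum

/-- The summand of the double Euler sum `es2 p q x y`, with `z = (n, k)` standing for the pair of
indices `n + k > n`. -/
noncomputable def eulerTerm (p q : ℕ) (x y : ℝ) (z : ℕ+ × ℕ+) : ℝ :=
  x ^ ((z.1 : ℕ) + (z.2 : ℕ)) * y ^ (z.1 : ℕ) / (((z.1 : ℝ) + (z.2 : ℝ)) ^ p * (z.1 : ℝ) ^ q)

lemma summable_pnat_one_div_rpow_mul {p q : ℝ} (hp : 1 < p) (hq : 1 < q) :
    Summable fun z : ℕ+ × ℕ+ ↦ 1 / (z.1 : ℝ) ^ p * (1 / (z.2 : ℝ) ^ q) := by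
  have summable_pnat {r : ℝ} (hr : 1 < r) : Summable fun n : ℕ+ ↦ 1 / (n : ℝ) ^ r :=
    (Real.summable_one_div_nat_rpow.mpr hr).comp_injective PNat.coe_injective
  exact (summable_pnat hp).mul_of_nonneg (summable_pnat hq)
    (fun _ ↦ by positivity) fun _ ↦ by positivity

-- Sharing the total degree `3` evenly gives both variables an exponent above `1`.
lemma rpow_mul_rpow_le_add_sq_mul {a b : ℝ} (ha : 0 < a) (hb : 0 ≤ b) :
    a ^ (3 / 2 : ℝ) * b ^ (3 / 2 : ℝ) ≤ (a + b) ^ 2 * a := by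
  calc a ^ (3 / 2 : ℝ) * b ^ (3 / 2 : ℝ) = a ^ (1 / 2 : ℝ) * b ^ (3 / 2 : ℝ) * a := by
        rw [show (3 / 2 : ℝ) = 1 / 2 + 1 by norm_num, Real.rpow_add_one ha.ne']
        ring
    _ ≤ (a + b) ^ (1 / 2 : ℝ) * (a + b) ^ (3 / 2 : ℝ) * a := by
        gcongr <;> linarith
    _ = (a + b) ^ 2 * a := by
        rw [← Real.rpow_add (by positivity)]
        norm_num

variable {p q : ℕ} {x y : ℝ}

lemma abs_eulerTerm_le (hp : 2 ≤ p) (hq : 1 ≤ q) (hx : |x| ≤ 1) (hxy : |x * y| ≤ 1)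
    (z : ℕ+ × ℕ+) :
    |eulerTerm p q x y z| ≤ 1 / (z.1 : ℝ) ^ (3 / 2 : ℝ) * (1 / (z.2 : ℝ) ^ (3 / 2 : ℝ)) := by
  obtain ⟨n, k⟩ := z
  have one_le_n : (1 : ℝ) ≤ n := by exact_mod_cast n.pos
  have numerator_le : |x ^ ((n : ℕ) + (k : ℕ)) * y ^ (n : ℕ)| ≤ 1 := by
    rw [pow_add, mul_right_comm, ← mul_pow, abs_mul, abs_pow, abs_pow]
    exact mul_le_one₀ (pow_le_one₀ (abs_nonneg _) hxy) (by positivity)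
      (pow_le_one₀ (abs_nonneg _) hx)
  have le_denominator :
      (n : ℝ) ^ (3 / 2 : ℝ) * (k : ℝ) ^ (3 / 2 : ℝ) ≤ ((n : ℝ) + k) ^ p * (n : ℝ) ^ q := by
    refine (rpow_mul_rpow_le_add_sq_mul (by positivity) (by positivity)).trans ?_
    gcongr
    · linarith [show (0 : ℝ) ≤ k by positivity]
    · exact le_self_pow₀ one_le_n (by omega)
  rw [eulerTerm, abs_div, abs_of_pos (by positivity : (0 : ℝ) < ((n : ℝ) + k) ^ p * (n : ℝ) ^ q),
    one_div_mul_one_div]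
  gcongr

theorem hasSum_eulerTerm (hp : 2 ≤ p) (hq : 1 ≤ q) (hx : |x| ≤ 1) (hxy : |x * y| ≤ 1) :
    HasSum (eulerTerm p q x y) (es2 p q x y) := by
  have summable_eulerTerm : Summable (eulerTerm p q x y) :=
    .of_norm_bounded (summable_pnat_one_div_rpow_mul (by norm_num) (by norm_num))
      (abs_eulerTerm_le hp hq hx hxy)
  have tsum_eq : ∑' z, eulerTerm p q x y z = es2 p q x y := summable_eulerTerm.tsum_prod
  exact tsum_eq ▸ summable_eulerTerm.hasSum

end EulerSum

section MordellTornheim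

/-- The summand, at `z = (m, n)`, of the double Mordell–Tornheim series `ζ_MT(s1, s2; s)` twisted by
`x ^ m * y ^ n`. -/
noncomputable def mordellTornheimTerm (s1 s2 s : ℕ) (x y : ℝ) (z : ℕ+ × ℕ+) : ℝ :=
  x ^ (z.1 : ℕ) * y ^ (z.2 : ℕ) /
    ((z.1 : ℝ) ^ s1 * (z.2 : ℝ) ^ s2 * ((z.1 : ℝ) + (z.2 : ℝ)) ^ s)

variable {s1 s2 s : ℕ} {x y : ℝ}

lemma mordellTornheimTerm_eq_sum_eulerTerm (h12 : 0 < s1 + s2) (hx : x ≠ 0) (hy : y ≠ 0)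
    (z : ℕ+ × ℕ+) :
    mordellTornheimTerm s1 s2 s x y z =
      (∑ a ∈ Finset.range s1,
        ((s2 + a - 1).choose a : ℝ) * eulerTerm (s + s2 + a) (s1 - a) y (x / y) z) +
      ∑ a ∈ Finset.range s2,
        ((s1 + a - 1).choose a : ℝ) * eulerTerm (s + s1 + a) (s2 - a) x (y / x) z.swap := by
  obtain ⟨m, n⟩ := z
  have twist_left : y ^ ((m : ℕ) + (n : ℕ)) * (x / y) ^ (m : ℕ) = x ^ (m : ℕ) * y ^ (n : ℕ) := by
    rw [pow_add, div_pow]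
    field_simp
  have twist_right : x ^ ((n : ℕ) + (m : ℕ)) * (y / x) ^ (n : ℕ) = x ^ (m : ℕ) * y ^ (n : ℕ) := by
    rw [pow_add, div_pow]
    field_simp
  have inv_mul_inv : (m : ℝ)⁻¹ * (n : ℝ)⁻¹ = ((m : ℝ) + n)⁻¹ * ((m : ℝ)⁻¹ + (n : ℝ)⁻¹) := by
    field_simp
    ring
  simp only [eulerTerm, Prod.swap_prod_mk, twist_left, twist_right, add_comm (n : ℝ) (m : ℝ)]
  rw [← div_pow_mul_partialFraction_inv, ← div_pow_mul_partialFraction_inv, ← mul_add,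
    ← pow_mul_pow_eq_partialFraction_add inv_mul_inv h12, mordellTornheimTerm]
  simp only [inv_pow]
  field_simp

theorem hasSum_mordellTornheimTerm (h12 : 0 < s1 + s2) (h1 : 1 < s1 + s) (h2 : 1 < s2 + s)
    (hx : x ≠ 0) (hy : y ≠ 0) (hx1 : |x| ≤ 1) (hy1 : |y| ≤ 1) :
    HasSum (mordellTornheimTerm s1 s2 s x y)
      ((∑ a ∈ Finset.range s1,
        ((s2 + a - 1).choose a : ℝ) * es2 (s + s2 + a) (s1 - a) y (x / y)) +
      ∑ a ∈ Finset.range s2,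
        ((s1 + a - 1).choose a : ℝ) * es2 (s + s1 + a) (s2 - a) x (y / x)) := by
  rw [funext (mordellTornheimTerm_eq_sum_eulerTerm h12 hx hy)]
  refine .add (hasSum_sum fun a ha ↦ .mul_left _ ?_) (hasSum_sum fun a ha ↦ .mul_left _ ?_) <;>
    rw [Finset.mem_range] at ha
  · exact hasSum_eulerTerm (by omega) (by omega) hy1 (by rwa [mul_div_cancel₀ _ hy])
  · exact (Equiv.prodComm ℕ+ ℕ+).hasSum_iff.mpr
      (hasSum_eulerTerm (by omega) (by omega) hx1 (by rwa [mul_div_cancel₀ _ hx]))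

lemma hasSum_zetaMT2 (h : Summable (mordellTornheimTerm s1 s2 s 1 1)) :
    HasSum (mordellTornheimTerm s1 s2 s 1 1) (zetaMT2 s1 s2 s) := by
  have tsum_eq : ∑' z, mordellTornheimTerm s1 s2 s 1 1 z = zetaMT2 s1 s2 s := by
    rw [h.tsum_prod]
    simp only [mordellTornheimTerm, one_pow, one_mul, zetaMT2]
  exact tsum_eq ▸ h.hasSum

end MordellTornheim

section EvenPart

lemma hasSum_two_mul_comp_two_mul_snd {α R : Type*} [Ring R] [TopologicalSpace R]
    [ContinuousAdd R] {f : α × ℕ+ → R} {S T : R} (hS : HasSum f S)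
    (hT : HasSum (fun z ↦ (-1) ^ (z.2 : ℕ) * f z) T) :
    HasSum (fun z : α × ℕ+ ↦ 2 * f (z.1, 2 * z.2)) (S + T) := by
  have injective_two_mul_snd : Function.Injective fun z : α × ℕ+ ↦ (z.1, 2 * z.2) :=
    Function.injective_id.prodMap (mul_right_injective 2)
  have eq_zero_of_notMem_range (z : α × ℕ+) (hz : z ∉ Set.range fun z : α × ℕ+ ↦ (z.1, 2 * z.2)) :
      f z + (-1) ^ (z.2 : ℕ) * f z = 0 := by
    have odd_snd : Odd (z.2 : ℕ) := by
      refine Nat.not_even_iff_odd.mp fun even_snd ↦ hz ?_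
      obtain ⟨k, hk⟩ := even_iff_two_dvd.mp even_snd
      have k_pos : 0 < k := by have := z.2.pos; omega
      exact ⟨(z.1, ⟨k, k_pos⟩), Prod.ext rfl (PNat.eq hk.symm)⟩
    rw [odd_snd.neg_one_pow, neg_one_mul, add_neg_cancel]
  convert (injective_two_mul_snd.hasSum_iff eq_zero_of_notMem_range).mpr (hS.add hT) using 2 with z
  simp [two_mul]

theorem zetaSO_zero_eq_two_pow_mul {s1 s2 s : ℕ}
    (h : Summable (mordellTornheimTerm s1 s2 s 1 1)) :
    zetaSO s1 s2 0 s =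
      2 ^ s2 / 2 * (zetaMT2 s1 s2 s + ∑' z, mordellTornheimTerm s1 s2 s 1 (-1) z) := by
  have summable_alternating : Summable (mordellTornheimTerm s1 s2 s 1 (-1)) :=
    .of_norm_bounded h.norm fun z ↦ by simp [mordellTornheimTerm]
  have alternating_eq (z : ℕ+ × ℕ+) :
      (-1) ^ (z.2 : ℕ) * mordellTornheimTerm s1 s2 s 1 1 z =
        mordellTornheimTerm s1 s2 s 1 (-1) z := by
    simp [mordellTornheimTerm, div_eq_mul_inv]
  have hasSum_even := (hasSum_two_mul_comp_two_mul_snd (hasSum_zetaMT2 h)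
    (summable_alternating.hasSum.congr_fun alternating_eq)).mul_left (2 ^ s2 / 2)
  have term_eq (z : ℕ+ × ℕ+) :
      2 ^ s2 / 2 * (2 * mordellTornheimTerm s1 s2 s 1 1 (z.1, 2 * z.2)) =
        1 / ((z.1 : ℝ) ^ s1 * (z.2 : ℝ) ^ s2 * ((z.1 : ℝ) + z.2) ^ 0 *
          ((z.1 : ℝ) + 2 * z.2) ^ s) := by
    simp only [mordellTornheimTerm, PNat.mul_coe, PNat.val_ofNat, Nat.cast_mul, Nat.cast_ofNat,
      one_pow, mul_pow, pow_zero]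
    field_simp
  simp only [term_eq] at hasSum_even
  rw [← hasSum_even.tsum_eq, hasSum_even.summable.tsum_prod, zetaSO]

end EvenPart

theorem stmt8 (s1 s2 s4 : ℕ) (h2 : 0 < s2) (h4 : 0 < s4) (h14 : 1 < s1 + s4)
    (h24 : 1 < s2 + s4) (h124 : 2 < s1 + s2 + s4) :
    zetaSO s1 s2 0 s4 =
      2 ^ (s2 - 1) * (zetaMT2 s1 s2 s4
        + (∑ a1 ∈ Finset.range s1,
            (Nat.choose (s2 + a1 - 1) a1 : ℝ) * es2 (s4 + s2 + a1) (s1 - a1) (-1) (-1))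
        + ∑ a2 ∈ Finset.range s2,
            (Nat.choose (s1 + a2 - 1) a2 : ℝ) * es2 (s4 + s1 + a2) (s2 - a2) 1 (-1)) := by
  have h12 : 0 < s1 + s2 := by omega
  have two_pow_pred : (2 : ℝ) ^ s2 / 2 = 2 ^ (s2 - 1) := by
    rw [← pow_sub_one_mul h2.ne', mul_div_cancel_right₀ _ two_ne_zero]
  have summable_untwisted : Summable (mordellTornheimTerm s1 s2 s4 1 1) :=
    (hasSum_mordellTornheimTerm h12 h14 h24 (by simp) (by simp) (by simp) (by simp)).summable
  have hasSum_alternating := hasSum_mordellTornheimTerm (x := 1) (y := -1) h12 h14 h24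
    (by simp) (by simp) (by simp) (by simp)
  rw [one_div_neg_one_eq_neg_one, div_one] at hasSum_alternating
  rw [zetaSO_zero_eq_two_pow_mul summable_untwisted, hasSum_alternating.tsum_eq, two_pow_pred,
    add_assoc]
end

section
/- ζ_so(1,1,1,0) = 2·ζ(3) and ζ_so(1,0,1,1) = (5/8)·ζ(3) and ζ_so(0,1,1,1) = (3/4)·ζ(3). -/
noncomputable def rzeta (s : ℕ) : ℝ := ∑' m : ℕ+, 1 / (m : ℝ) ^ s

/-!
Four linear relations determine the values. Writing the third linear form `m + n` as a combination
of `m` and `n` gives `ζ_so(1,1,1,0) = ζ_so(1,0,2,0) + ζ_so(0,1,2,0)`, whose two summands are equal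
by symmetry; doing the same with `m + 2n` gives
`ζ_so(1,1,1,0) = 2 ζ_so(1,0,1,1) + ζ_so(0,1,1,1)`. Cutting the quadrant along its diagonal gives
`ζ_so(1,1,1,0) = ζ(3) / 2 + 2 ζ_so(0,1,1,1)`. Finally, telescoping the sum over `n` turns
`ζ_so(1,1,1,0)` into `∑ H_m / m²`, which is `ζ(3) + ζ_so(0,1,2,0)`; this is Euler's argument for
`ζ(2,1) = ζ(3)`.
-/

open Filter Topology

section Series

theorem hasSum_pnat_prod_of_trichotomy {α : Type*} [AddCommMonoid α] [TopologicalSpace α]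
    [ContinuousAdd α] {F : ℕ+ × ℕ+ → α} {d l u : α}
    (hd : HasSum (fun n : ℕ+ ↦ F (n, n)) d)
    (hl : HasSum (fun p : ℕ+ × ℕ+ ↦ F (p.1 + p.2, p.2)) l)
    (hu : HasSum (fun p : ℕ+ × ℕ+ ↦ F (p.2, p.1 + p.2)) u) :
    HasSum F (d + (l + u)) := by
  let φ : ℕ+ ⊕ (ℕ+ × ℕ+) ⊕ (ℕ+ × ℕ+) → ℕ+ × ℕ+ :=
    Sum.elim (fun n ↦ (n, n)) (Sum.elim (fun p ↦ (p.1 + p.2, p.2)) (fun p ↦ (p.2, p.1 + p.2)))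
  have φ_injective : φ.Injective := by
    rintro (n | ⟨a, b⟩ | ⟨a, b⟩) (m | ⟨c, d⟩ | ⟨c, d⟩) h <;>
      simp only [φ, Sum.elim_inl, Sum.elim_inr, Prod.mk.injEq, ← PNat.coe_inj,
        PNat.add_coe] at h <;>
      simp only [Sum.inl.injEq, Sum.inr.injEq, Prod.mk.injEq, ← PNat.coe_inj, reduceCtorEq] <;>
      grind [PNat.pos]
  have φ_surjective : φ.Surjective := by
    rintro ⟨a, b⟩
    rcases lt_trichotomy a b with hab | rfl | hba
    · exact ⟨.inr (.inr (b - a, a)), by simp [φ, PNat.sub_add_of_lt hab]⟩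
    · exact ⟨.inl a, rfl⟩
    · exact ⟨.inr (.inl (a - b, b)), by simp [φ, PNat.sub_add_of_lt hba]⟩
  have hφ : HasSum (F ∘ φ) (d + (l + u)) := HasSum.sum hd (HasSum.sum hl hu)
  exact (Equiv.ofBijective φ ⟨φ_injective, φ_surjective⟩).hasSum_iff.1 hφ

theorem hasSum_sub_shift_of_antitone {f : ℕ → ℝ} (hf : Antitone f)
    (hf_lim : Tendsto f atTop (𝓝 0)) (k : ℕ) :
    HasSum (fun n ↦ f n - f (n + k)) (∑ i ∈ Finset.range k, f i) := by
  have partial_sum (N : ℕ) : ∑ n ∈ Finset.range N, (f n - f (n + k)) =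
      ∑ i ∈ Finset.range k, f i - ∑ i ∈ Finset.range k, f (N + i) := by
    have hNk := Finset.sum_range_add f N k
    have hkN := Finset.sum_range_add f k N
    simp only [add_comm k] at hkN
    rw [Finset.sum_sub_distrib]
    linarith
  have tail_lim : Tendsto (fun N ↦ ∑ i ∈ Finset.range k, f (N + i)) atTop (𝓝 0) := by
    simpa using tendsto_finsetSum (Finset.range k) fun i _ ↦
      hf_lim.comp (tendsto_add_atTop_nat i)
  rw [hasSum_iff_tendsto_nat_of_nonneg fun n ↦ sub_nonneg.2 (hf (Nat.le_add_right n k))]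
  simpa only [partial_sum, sub_zero] using tail_lim.const_sub (∑ i ∈ Finset.range k, f i)

theorem hasSum_one_div_mul_add_harmonic (a : ℕ+) :
    HasSum (fun n : ℕ+ ↦ 1 / ((n : ℝ) * (a + n))) (harmonic a / a) := by
  have h_antitone : Antitone fun n : ℕ ↦ 1 / ((n : ℝ) + 1) := fun m n hmn ↦
    one_div_le_one_div_of_le (by positivity) (by gcongr)
  have h_telescope : HasSum (fun n : ℕ ↦ 1 / ((n : ℝ) + 1) - 1 / (((n + a : ℕ) : ℝ) + 1))
      (harmonic a) := by
    simpa [harmonic] using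
      hasSum_sub_shift_of_antitone h_antitone tendsto_one_div_add_atTop_nhds_zero_nat a
  rw [← Equiv.pnatEquivNat.symm.hasSum_iff]
  refine (h_telescope.div_const (a : ℝ)).congr_fun fun n ↦ ?_
  simp only [Function.comp_apply, Equiv.pnatEquivNat_symm_apply, Nat.succPNat_coe,
    Nat.succ_eq_add_one, Nat.cast_add, Nat.cast_one]
  field_simp
  ring

theorem hasSum_ite_le_harmonic (a : ℕ+) :
    HasSum (fun b : ℕ+ ↦ if b ≤ a then 1 / (b : ℝ) else 0) (harmonic a) := by
  have h_sum :
      ∑ i ∈ Finset.range a, (if i < (a : ℕ) then 1 / ((i : ℝ) + 1) else 0) = harmonic a := by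
    rw [Finset.sum_congr rfl fun i hi ↦ if_pos (Finset.mem_range.1 hi)]
    simp [harmonic]
  have h_range : HasSum (fun i : ℕ ↦ if i < (a : ℕ) then 1 / ((i : ℝ) + 1) else 0) (harmonic a) :=
    h_sum ▸ hasSum_sum_of_ne_finset_zero fun i hi ↦ if_neg (by simpa using hi)
  rw [← Equiv.pnatEquivNat.symm.hasSum_iff]
  refine h_range.congr_fun fun i ↦ ?_
  simp [← PNat.coe_le_coe]

end Series

theorem hasSum_rzeta {s : ℕ} (hs : 1 < s) : HasSum (fun n : ℕ+ ↦ 1 / (n : ℝ) ^ s) (rzeta s) :=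
  ((Real.summable_one_div_nat_pow.2 hs).comp_injective PNat.coe_injective).hasSum

/-- The general term of the double series `zetaSO`, as a function on the quadrant, so that the
iterated sum in `zetaSO` can be handled as an unconditional sum over pairs. -/
noncomputable def soTerm (s1 s2 s3 s4 : ℕ) (p : ℕ+ × ℕ+) : ℝ :=
  1 / ((p.1 : ℝ) ^ s1 * (p.2 : ℝ) ^ s2 * ((p.1 : ℝ) + p.2) ^ s3 * ((p.1 : ℝ) + 2 * p.2) ^ s4)

section Convergence

variable {s1 s2 s3 s4 : ℕ}

theorem pow_three_mul_pow_three_le_sq {x y : ℝ} (hx : 1 ≤ x) (hy : 1 ≤ y)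
    (h1 : 2 ≤ s1 + s3 + s4) (h2 : 2 ≤ s2 + s3 + s4) (h : 3 ≤ s1 + s2 + s3 + s4) :
    x ^ 3 * y ^ 3 ≤ (x ^ s1 * y ^ s2 * (x + y) ^ s3 * (x + 2 * y) ^ s4) ^ 2 := by
  -- Share out the factors `x + y` of the square: `i` of them are bounded below by `x`, `j` by `y`.
  obtain ⟨i, j, hij, hi, hj⟩ :
      ∃ i j, i + j = 2 * (s3 + s4) ∧ 3 ≤ 2 * s1 + i ∧ 3 ≤ 2 * s2 + j :=
    ⟨3 - 2 * s1, 2 * (s3 + s4) - (3 - 2 * s1), by omega, by omega, by omega⟩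
  calc x ^ 3 * y ^ 3 ≤ x ^ (2 * s1 + i) * y ^ (2 * s2 + j) := by gcongr
    _ = (x ^ s1 * y ^ s2) ^ 2 * (x ^ i * y ^ j) := by ring
    _ ≤ (x ^ s1 * y ^ s2) ^ 2 * ((x + y) ^ i * (x + y) ^ j) := by gcongr <;> linarith
    _ = (x ^ s1 * y ^ s2 * (x + y) ^ s3 * (x + y) ^ s4) ^ 2 := by
      rw [← pow_add, hij]
      ring
    _ ≤ (x ^ s1 * y ^ s2 * (x + y) ^ s3 * (x + 2 * y) ^ s4) ^ 2 := by
      gcongr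
      linarith

theorem summable_soTerm (h1 : 2 ≤ s1 + s3 + s4) (h2 : 2 ≤ s2 + s3 + s4)
    (h : 3 ≤ s1 + s2 + s3 + s4) : Summable (soTerm s1 s2 s3 s4) := by
  have h_rpow : Summable fun a : ℕ+ ↦ 1 / (a : ℝ) ^ (3 / 2 : ℝ) :=
    (Real.summable_one_div_nat_rpow.2 (by norm_num)).comp_injective PNat.coe_injective
  have sq_rpow (a : ℕ+) : ((a : ℝ) ^ (3 / 2 : ℝ)) ^ 2 = (a : ℝ) ^ 3 := by
    rw [← Real.rpow_natCast, ← Real.rpow_mul (by positivity), ← Real.rpow_natCast]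
    norm_num
  refine .of_nonneg_of_le (fun p ↦ by unfold soTerm; positivity) (fun p ↦ ?_)
    (h_rpow.mul_of_nonneg h_rpow (fun a ↦ by positivity) fun a ↦ by positivity)
  rw [soTerm, one_div_mul_one_div]
  refine one_div_le_one_div_of_le (by positivity) (le_of_sq_le_sq ?_ (by positivity))
  rw [mul_pow, sq_rpow, sq_rpow]
  exact pow_three_mul_pow_three_le_sq (mod_cast p.1.pos) (mod_cast p.2.pos) h1 h2 h

theorem hasSum_zetaSO (s1 s2 s3 s4 : ℕ) (h1 : 2 ≤ s1 + s3 + s4)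
    (h2 : 2 ≤ s2 + s3 + s4) (h : 3 ≤ s1 + s2 + s3 + s4) :
    HasSum (soTerm s1 s2 s3 s4) (zetaSO s1 s2 s3 s4) := by
  have h_summable := summable_soTerm h1 h2 h
  have h_tsum : ∑' p, soTerm s1 s2 s3 s4 p = zetaSO s1 s2 s3 s4 := h_summable.tsum_prod
  exact h_tsum ▸ h_summable.hasSum

end Convergence

section Relations

variable {s1 s2 s3 s4 : ℕ}

theorem zetaSO_swap (h1 : 2 ≤ s1 + s3) (h2 : 2 ≤ s2 + s3) (h : 3 ≤ s1 + s2 + s3) :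
    zetaSO s1 s2 s3 0 = zetaSO s2 s1 s3 0 := by
  have h_swap := (Equiv.prodComm ℕ+ ℕ+).hasSum_iff.2
    (hasSum_zetaSO s2 s1 s3 0 h2 h1 (by omega))
  refine (hasSum_zetaSO s1 s2 s3 0 h1 h2 h).unique (h_swap.congr_fun fun p ↦ ?_)
  simp only [Function.comp_apply, Equiv.prodComm_apply, soTerm, Prod.fst_swap, Prod.snd_swap]
  ring

theorem zetaSO_partialFractions_third (h1 : 1 ≤ s1 + s3 + s4) (h2 : 1 ≤ s2 + s3 + s4) :
    zetaSO (s1 + 1) (s2 + 1) s3 s4 =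
      zetaSO (s1 + 1) s2 (s3 + 1) s4 + zetaSO s1 (s2 + 1) (s3 + 1) s4 := by
  have h_fst := hasSum_zetaSO (s1 + 1) s2 (s3 + 1) s4 (by omega) (by omega) (by omega)
  have h_snd := hasSum_zetaSO s1 (s2 + 1) (s3 + 1) s4 (by omega) (by omega) (by omega)
  refine (hasSum_zetaSO _ _ _ _ (by omega) (by omega) (by omega)).unique
    ((h_fst.add h_snd).congr_fun fun p ↦ ?_)
  simp only [soTerm]
  field_simp
  ring

theorem zetaSO_partialFractions_fourth (h1 : 1 ≤ s1 + s3 + s4) (h2 : 1 ≤ s2 + s3 + s4) :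
    zetaSO (s1 + 1) (s2 + 1) s3 s4 =
      2 * zetaSO (s1 + 1) s2 s3 (s4 + 1) + zetaSO s1 (s2 + 1) s3 (s4 + 1) := by
  have h_fst := hasSum_zetaSO (s1 + 1) s2 s3 (s4 + 1) (by omega) (by omega) (by omega)
  have h_snd := hasSum_zetaSO s1 (s2 + 1) s3 (s4 + 1) (by omega) (by omega) (by omega)
  refine (hasSum_zetaSO _ _ _ _ (by omega) (by omega) (by omega)).unique
    (((h_fst.mul_left 2).add h_snd).congr_fun fun p ↦ ?_)
  simp only [soTerm]
  field_simp
  ring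

theorem zetaSO_eq_diagonal_add (h1 : 2 ≤ s1 + s3) (h2 : 2 ≤ s2 + s3) (h : 3 ≤ s1 + s2 + s3) :
    zetaSO s1 s2 s3 0 =
      rzeta (s1 + s2 + s3) / 2 ^ s3 + (zetaSO 0 s2 s1 s3 + zetaSO 0 s1 s2 s3) := by
  have h_diagonal := (hasSum_rzeta (s := s1 + s2 + s3) (by omega)).div_const (2 ^ s3)
  have h_below := hasSum_zetaSO 0 s2 s1 s3 (by omega) (by omega) (by omega)
  have h_above := hasSum_zetaSO 0 s1 s2 s3 (by omega) (by omega) (by omega)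
  refine (hasSum_zetaSO s1 s2 s3 0 h1 h2 h).unique (hasSum_pnat_prod_of_trichotomy
    (h_diagonal.congr_fun fun n ↦ ?_) (h_below.congr_fun fun p ↦ ?_)
    (h_above.congr_fun fun p ↦ ?_))
  · simp only [soTerm, ← two_mul]
    ring
  all_goals
    simp only [soTerm, PNat.add_coe, Nat.cast_add]
    ring

end Relations

section Euler

variable {s : ℕ}

theorem hasSum_harmonic_div_pow_zetaSO (hs : 1 ≤ s) :
    HasSum (fun a : ℕ+ ↦ (harmonic a : ℝ) / (a : ℝ) ^ (s + 1)) (zetaSO s 1 1 0) := by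
  refine (hasSum_zetaSO s 1 1 0 (by omega) (by omega) (by omega)).prod_fiberwise fun a ↦ ?_
  rw [pow_succ', ← div_div]
  refine ((hasSum_one_div_mul_add_harmonic a).div_const ((a : ℝ) ^ s)).congr_fun fun n ↦ ?_
  simp only [soTerm, pow_zero, pow_one, mul_one]
  field_simp

theorem hasSum_harmonic_div_pow_rzeta_add (hs : 2 ≤ s) :
    HasSum (fun a : ℕ+ ↦ (harmonic a : ℝ) / (a : ℝ) ^ s) (rzeta (s + 1) + zetaSO 0 1 s 0) := by
  let F : ℕ+ × ℕ+ → ℝ := fun p ↦ (if p.2 ≤ p.1 then 1 / (p.2 : ℝ) else 0) / (p.1 : ℝ) ^ s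
  have h_diagonal : HasSum (fun n : ℕ+ ↦ F (n, n)) (rzeta (s + 1)) := by
    refine (hasSum_rzeta (by omega)).congr_fun fun n ↦ ?_
    simp only [F, le_refl, if_true, div_div, pow_succ']
  have h_below : HasSum (fun p : ℕ+ × ℕ+ ↦ F (p.1 + p.2, p.2)) (zetaSO 0 1 s 0) := by
    refine (hasSum_zetaSO 0 1 s 0 (by omega) (by omega) (by omega)).congr_fun fun p ↦ ?_
    simp [F, soTerm, (PNat.lt_add_left p.2 p.1).le, div_eq_mul_inv, mul_comm]
  have h_above : HasSum (fun p : ℕ+ × ℕ+ ↦ F (p.2, p.1 + p.2)) 0 := by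
    simp [F, (PNat.lt_add_left _ _).not_ge, hasSum_zero]
  have hF := hasSum_pnat_prod_of_trichotomy h_diagonal h_below h_above
  rw [add_zero] at hF
  exact hF.prod_fiberwise fun a ↦ (hasSum_ite_le_harmonic a).div_const _

theorem zetaSO_one_one_zero_eq_rzeta_add (hs : 1 ≤ s) :
    zetaSO s 1 1 0 = rzeta (s + 2) + zetaSO 0 1 (s + 1) 0 :=
  (hasSum_harmonic_div_pow_zetaSO hs).unique (hasSum_harmonic_div_pow_rzeta_add (by omega))

end Euler

theorem stmt14 :
    zetaSO 1 1 1 0 = 2 * rzeta 3 ∧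
    zetaSO 1 0 1 1 = (5 / 8) * rzeta 3 ∧
    zetaSO 0 1 1 1 = (3 / 4) * rzeta 3 := by
  have euler : zetaSO 1 1 1 0 = rzeta 3 + zetaSO 0 1 2 0 :=
    zetaSO_one_one_zero_eq_rzeta_add le_rfl
  have split_add : zetaSO 1 1 1 0 = zetaSO 1 0 2 0 + zetaSO 0 1 2 0 :=
    zetaSO_partialFractions_third le_rfl le_rfl
  have swap : zetaSO 1 0 2 0 = zetaSO 0 1 2 0 :=
    zetaSO_swap (by norm_num) (by norm_num) (by norm_num)
  have split_add_two_mul : zetaSO 1 1 1 0 = 2 * zetaSO 1 0 1 1 + zetaSO 0 1 1 1 :=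
    zetaSO_partialFractions_fourth le_rfl le_rfl
  have diagonal : zetaSO 1 1 1 0 = rzeta 3 / 2 ^ 1 + (zetaSO 0 1 1 1 + zetaSO 0 1 1 1) :=
    zetaSO_eq_diagonal_add (by norm_num) (by norm_num) (by norm_num)
  refine ⟨?_, ?_, ?_⟩ <;> linarith
end
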